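/- For two d-dimensional Gaussian measures with common mean μ and covariances c₁Σ and c₂Σ, where Σ is symmetric positive definite and c₁, c₂ > 0, the total variation distance is bounded: d_TV(N_d(μ, c₁Σ), N_d(μ, c₂Σ)) ≤ C · |c₁/c₂ - 1| · √d for an absolute constant C > 0, provided |c₁/c₂ - 1| ≤ 1/2. -/

import Mathlib

open MeasureTheory Real Matrix

noncomputable def dTV {Ω : Type*} [MeasurableSpace Ω] (P Q : Measure Ω) : ℝ :=
  ⨆ A : {A : Set Ω // MeasurableSet A}, |(P A).toReal - (Q A).toReal|

/-- Gaussian measure on `Fin d → ℝ` with mean `μ` and covariance `S`, defined via density. -/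
noncomputable def gaussMeasure (d : ℕ) (μ : Fin d → ℝ) (S : Matrix (Fin d) (Fin d) ℝ) :
    Measure (Fin d → ℝ) :=
  volume.withDensity fun θ =>
    ENNReal.ofReal ((2 * π) ^ (-(d : ℝ) / 2) * S.det ^ (-(1 : ℝ) / 2) *
      Real.exp (-(1 / 2) * ((θ - μ) ⬝ᵥ S⁻¹.mulVec (θ - μ))))

open scoped MatrixOrder Matrix.Norms.L2Operator in
lemma gauss_integral_aux (d : ℕ) (M : Matrix (Fin d) (Fin d) ℝ) (hM : M.PosDef) (μ : Fin d → ℝ) :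
    ∫ x : Fin d → ℝ, Real.exp (-(1 / 2) * ((x - μ) ⬝ᵥ M.mulVec (x - μ))) =
      (2 * π) ^ ((d : ℝ) / 2) * M.det ^ (-(1 : ℝ) / 2) := by
  rw [integral_sub_right_eq_self
    (fun x : Fin d → ℝ => Real.exp (-(1 / 2) * (x ⬝ᵥ M.mulVec x))) μ]
  obtain ⟨B, hB⟩ : ∃ B : Matrix (Fin d) (Fin d) ℝ, M = Bᵀ * B := by
    obtain ⟨B, hB⟩ := CStarAlgebra.nonneg_iff_eq_star_mul_self.mp hM.posSemidef.nonneg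
    exact ⟨B, by simpa [star_eq_conjTranspose] using hB⟩
  have hdet : M.det = B.det ^ 2 := by rw [hB, det_mul, det_transpose, sq]
  have hpos := hM.det_pos
  have hB0 : B.det ≠ 0 := by
    intro h; rw [hdet, h] at hpos; simp at hpos
  have hq : ∀ x : Fin d → ℝ, x ⬝ᵥ M.mulVec x = (toLin' B x) ⬝ᵥ (toLin' B x) := by
    intro x
    rw [toLin'_apply, hB, ← mulVec_mulVec, dotProduct_mulVec, vecMul_transpose]
  simp_rw [hq]
  have hmeas : Measurable (toLin' B) := (LinearMap.continuous_on_pi _).measurable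
  have h1 := integral_map (μ := (volume : Measure (Fin d → ℝ))) hmeas.aemeasurable
    (f := fun y : Fin d → ℝ => Real.exp (-(1 / 2) * (y ⬝ᵥ y)))
    (by apply Continuous.aestronglyMeasurable; unfold dotProduct; fun_prop)
  rw [← h1, Real.map_matrix_volume_pi_eq_smul_volume_pi hB0, integral_smul_measure]
  have h2 : ∫ y : Fin d → ℝ, Real.exp (-(1 / 2) * (y ⬝ᵥ y)) = (2 * π) ^ ((d : ℝ) / 2) := by
    have : ∀ y : Fin d → ℝ, Real.exp (-(1 / 2) * (y ⬝ᵥ y)) =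
        ∏ i, Real.exp (-(1 / 2) * (y i) ^ 2) := by
      intro y
      rw [← Real.exp_sum, dotProduct, Finset.mul_sum]
      simp only [sq]
    simp_rw [this]
    rw [integral_fintype_prod_volume_eq_prod (fun _ (v : ℝ) => Real.exp (-(1 / 2) * v ^ 2))]
    simp only [integral_gaussian, Finset.prod_const, Finset.card_univ, Fintype.card_fin]
    rw [show π / (1 / 2) = 2 * π by ring, Real.sqrt_eq_rpow, ← Real.rpow_natCast,
      ← Real.rpow_mul (by positivity)]
    congr 1; ring
  rw [h2, ENNReal.toReal_ofReal (abs_nonneg _), hdet, smul_eq_mul, mul_comm]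
  congr 1
  rw [show (-(1 : ℝ) / 2) = -(1 / 2) by ring, Real.rpow_neg (sq_nonneg _), ← Real.sqrt_eq_rpow,
    Real.sqrt_sq_eq_abs, abs_inv]

lemma gauss_integrable_aux (d : ℕ) (M : Matrix (Fin d) (Fin d) ℝ) (hM : M.PosDef)
    (μ : Fin d → ℝ) :
    Integrable (fun x : Fin d → ℝ => Real.exp (-(1 / 2) * ((x - μ) ⬝ᵥ M.mulVec (x - μ)))) := by
  by_contra h
  have h1 := gauss_integral_aux d M hM μ
  rw [integral_undef h] at h1
  have := hM.det_pos
  have : 0 < (2 * π) ^ ((d : ℝ) / 2) * M.det ^ (-(1 : ℝ) / 2) := by positivity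
  linarith

/-- Total variation bound from Hellinger affinity. -/
lemma tv_hellinger_aux {Ω : Type*} [MeasurableSpace Ω] (ν : Measure Ω) (a b : Ω → ℝ)
    (ha0 : ∀ x, 0 ≤ a x) (hb0 : ∀ x, 0 ≤ b x)
    (ha : Integrable (fun x => a x ^ 2) ν) (hb : Integrable (fun x => b x ^ 2) ν)
    (hab : Integrable (fun x => a x * b x) ν)
    (ha1 : ∫ x, a x ^ 2 ∂ν = 1) (hb1 : ∫ x, b x ^ 2 ∂ν = 1) (h : ℝ) (hh : 0 ≤ h)
    (hBC : 2 - 2 * ∫ x, a x * b x ∂ν ≤ h ^ 2) :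
    dTV (ν.withDensity fun x => ENNReal.ofReal (a x ^ 2))
      (ν.withDensity fun x => ENNReal.ofReal (b x ^ 2)) ≤ 2 * h := by
  have hsqInt : ∫ x, |a x ^ 2 - b x ^ 2| ∂ν ≤ 2 * h := by
    apply le_of_forall_pos_le_add
    intro ε hε
    set k := h + ε / 2 with hk
    have hk0 : 0 < k := by positivity
    have hpt : ∀ x, |a x ^ 2 - b x ^ 2| ≤
        (1 / k + k / 2) * a x ^ 2 + (1 / k + k / 2) * b x ^ 2 - 2 / k * (a x * b x) := by
      intro x
      have e : (1 / k + k / 2) * a x ^ 2 + (1 / k + k / 2) * b x ^ 2 - 2 / k * (a x * b x)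
        = 1 / k * (a x - b x) ^ 2 + k / 2 * (a x ^ 2 + b x ^ 2) := by ring
      rw [e]
      have e2 : a x ^ 2 - b x ^ 2 = (a x - b x) * (a x + b x) := by ring
      rw [e2, abs_mul, abs_of_nonneg (add_nonneg (ha0 x) (hb0 x)), ← sq_abs (a x - b x)]
      set u := |a x - b x|
      have h3 : 0 ≤ 1 / k * (u - k / 2 * (a x + b x)) ^ 2 := by positivity
      have h4 : 1 / k * (u - k / 2 * (a x + b x)) ^ 2 =
        1 / k * u ^ 2 - u * (a x + b x) + k / 4 * (a x + b x) ^ 2 := by field_simp; ring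
      nlinarith [mul_nonneg hk0.le (sq_nonneg (a x - b x))]
    have h1 := integral_mono (ha.sub hb).abs
      (((ha.const_mul (1 / k + k / 2)).add (hb.const_mul (1 / k + k / 2))).sub
        (hab.const_mul (2 / k))) hpt
    have h2 : ∫ x, ((1 / k + k / 2) * a x ^ 2 + (1 / k + k / 2) * b x ^ 2
        - 2 / k * (a x * b x)) ∂ν = 1 / k * (2 - 2 * ∫ x, a x * b x ∂ν) + k := by
      have hs : Integrable (fun x => (1 / k + k / 2) * a x ^ 2 + (1 / k + k / 2) * b x ^ 2) ν :=
        (ha.const_mul _).add (hb.const_mul _)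
      rw [integral_sub hs (hab.const_mul _),
        integral_add (ha.const_mul _) (hb.const_mul _), integral_const_mul, integral_const_mul,
        integral_const_mul, ha1, hb1]
      ring
    have h5 : 1 / k * (2 - 2 * ∫ x, a x * b x ∂ν) ≤ k := by
      rw [one_div, inv_mul_le_iff₀ hk0]
      nlinarith
    calc _ ≤ _ := h1
      _ = _ := h2
      _ ≤ _ := by linarith
  have key : ∀ (f : Ω → ℝ), Integrable (fun x => f x ^ 2) ν → ∀ A, MeasurableSet A →
      ((ν.withDensity fun x => ENNReal.ofReal (f x ^ 2)) A).toReal = ∫ x in A, f x ^ 2 ∂ν := by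
    intro f hf A hA
    rw [withDensity_apply _ hA, ← ofReal_integral_eq_lintegral_ofReal hf.integrableOn
      (Filter.Eventually.of_forall fun x => sq_nonneg _), ENNReal.toReal_ofReal]
    exact integral_nonneg fun x => sq_nonneg _
  unfold dTV
  have : Nonempty {A : Set Ω // MeasurableSet A} := ⟨⟨∅, MeasurableSet.empty⟩⟩
  apply ciSup_le
  rintro ⟨A, hA⟩
  rw [key a ha A hA, key b hb A hA, ← integral_sub ha.integrableOn hb.integrableOn]
  refine le_trans (abs_integral_le_integral_abs) (le_trans ?_ hsqInt)
  exact setIntegral_le_integral (ha.sub hb).abs (Filter.Eventually.of_forall fun x => abs_nonneg _)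

theorem gaussian_tv_proportional_covariances :
    ∃ C > (0 : ℝ), ∀ (d : ℕ) (μ : Fin d → ℝ) (S : Matrix (Fin d) (Fin d) ℝ),
      S.PosDef → ∀ c₁ c₂ : ℝ, 0 < c₁ → 0 < c₂ → |c₁ / c₂ - 1| ≤ 1 / 2 →
        dTV (gaussMeasure d μ (c₁ • S)) (gaussMeasure d μ (c₂ • S)) ≤
          C * |c₁ / c₂ - 1| * Real.sqrt d := by
  refine ⟨1, one_pos, ?_⟩
  intro d μ S hS c₁ c₂ hc₁ hc₂ hr
  have hD := hS.det_pos
  set D := S.det with hDdef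
  have hinv : ∀ c : ℝ, 0 < c → (c • S)⁻¹ = c⁻¹ • S⁻¹ := by
    intro c hc
    have := invertibleOfNonzero hc.ne'
    rw [Matrix.inv_smul _ _ (isUnit_iff_ne_zero.2 hD.ne'), invOf_eq_inv]
  set q : (Fin d → ℝ) → ℝ := fun x => (x - μ) ⬝ᵥ S⁻¹.mulVec (x - μ) with hq
  have hpd : ∀ t : ℝ, 0 < t → (t • S⁻¹).PosDef := fun t ht => hS.inv.smul ht
  have hI : ∀ t : ℝ, 0 < t → ∫ x, Real.exp (-(1 / 2) * (t * q x)) =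
      (2 * π) ^ ((d : ℝ) / 2) * (t ^ d * D⁻¹) ^ (-(1 : ℝ) / 2) := by
    intro t ht
    have := gauss_integral_aux d _ (hpd t ht) μ
    simpa only [smul_mulVec, dotProduct_smul, det_smul, det_nonsing_inv, Ring.inverse_eq_inv',
      smul_eq_mul, Fintype.card_fin] using this
  have hInt : ∀ t : ℝ, 0 < t → Integrable (fun x => Real.exp (-(1 / 2) * (t * q x))) := by
    intro t ht
    have := gauss_integrable_aux d _ (hpd t ht) μ
    simpa only [smul_mulVec, dotProduct_smul, smul_eq_mul] using this
  set K : ℝ → ℝ := fun c => (2 * π) ^ (-(d : ℝ) / 2) * (c ^ d * D) ^ (-(1 : ℝ) / 2) with hK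
  have hK0 : ∀ c, 0 < c → 0 < K c := by
    intro c hc; simp only [hK]; positivity
  set a : ℝ → (Fin d → ℝ) → ℝ := fun c x =>
    Real.sqrt (K c) * Real.exp (-(1 / 2) * (c⁻¹ / 2 * q x)) with ha
  have hasq : ∀ c, 0 < c → ∀ x, a c x ^ 2 = K c * Real.exp (-(1 / 2) * (c⁻¹ * q x)) := by
    intro c hc x
    simp only [ha]
    rw [mul_pow, Real.sq_sqrt (hK0 c hc).le, sq, ← Real.exp_add]
    ring_nf
  have hgm : ∀ c, 0 < c → gaussMeasure d μ (c • S) =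
      volume.withDensity fun x => ENNReal.ofReal (a c x ^ 2) := by
    intro c hc
    unfold gaussMeasure
    congr 1
    ext x
    rw [hasq c hc, hinv c hc]
    simp [hK, hq, smul_mulVec, dotProduct_smul, det_smul, hDdef]
  have hsqInt : ∀ c, 0 < c → Integrable (fun x => a c x ^ 2) := by
    intro c hc
    simp_rw [hasq c hc]
    exact (hInt _ (inv_pos.2 hc)).const_mul _
  have hone : ∀ c, 0 < c → ∫ x, a c x ^ 2 = 1 := by
    intro c hc
    simp_rw [hasq c hc]
    rw [integral_const_mul, hI _ (inv_pos.2 hc)]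
    simp only [hK]
    rw [inv_pow, ← mul_inv, Real.inv_rpow (by positivity), neg_div, Real.rpow_neg (by positivity)]
    field_simp
  set m := (c₁⁻¹ + c₂⁻¹) / 2 with hm
  have hm0 : 0 < m := by positivity
  have hprod : ∀ x, a c₁ x * a c₂ x =
      (Real.sqrt (K c₁) * Real.sqrt (K c₂)) * Real.exp (-(1 / 2) * (m * q x)) := by
    intro x
    simp only [ha]
    rw [mul_mul_mul_comm, ← Real.exp_add, hm]
    ring_nf
  have hintp : Integrable (fun x => a c₁ x * a c₂ x) := by
    simp_rw [hprod]
    exact (hInt _ hm0).const_mul _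
  have hBC : ∫ x, a c₁ x * a c₂ x = (Real.sqrt (K c₁) * Real.sqrt (K c₂)) *
      ((2 * π) ^ ((d : ℝ) / 2) * (m ^ d * D⁻¹) ^ (-(1 : ℝ) / 2)) := by
    simp_rw [hprod]
    rw [integral_const_mul, hI _ hm0]
  have hlogK : ∀ c, 0 < c → Real.log (K c) =
      -(d : ℝ) / 2 * Real.log (2 * π) + -(1 : ℝ) / 2 * (d * Real.log c + Real.log D) := by
    intro c hc
    simp only [hK]
    rw [Real.log_mul (by positivity) (by positivity), Real.log_rpow (by positivity),
      Real.log_rpow (by positivity), Real.log_mul (pow_pos hc d).ne' hD.ne', Real.log_pow]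
  have hk1 := hK0 c₁ hc₁
  have hk2 := hK0 c₂ hc₂
  have hlog : Real.log (∫ x, a c₁ x * a c₂ x) =
      -(d / 4) * Real.log (m ^ 2 * (c₁ * c₂)) := by
    rw [hBC, Real.log_mul (by positivity) (by positivity),
      Real.log_mul (by positivity) (by positivity), Real.log_mul (by positivity) (by positivity),
      Real.log_rpow (by positivity), Real.log_rpow (by positivity),
      Real.log_mul (pow_pos hm0 d).ne' (inv_pos.2 hD).ne', Real.log_pow, Real.log_inv,
      Real.log_sqrt hk1.le, Real.log_sqrt hk2.le, hlogK _ hc₁, hlogK _ hc₂,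
      Real.log_mul (pow_pos hm0 2).ne' (mul_pos hc₁ hc₂).ne', Real.log_pow,
      Real.log_mul hc₁.ne' hc₂.ne']
    push_cast
    ring
  have hBCpos : 0 < ∫ x, a c₁ x * a c₂ x := by rw [hBC]; positivity
  have hb1 := Real.log_le_sub_one_of_pos hBCpos
  have hb2 := Real.log_le_sub_one_of_pos (show 0 < m ^ 2 * (c₁ * c₂) by positivity)
  set r := c₁ / c₂ with hrdef
  have hc : c₁ = r * c₂ := by rw [hrdef]; field_simp
  have hr2 : 1 / 2 ≤ r := by have := (abs_le.1 hr).1; linarith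
  have hu : m ^ 2 * (c₁ * c₂) - 1 = (r - 1) ^ 2 / (4 * r) := by
    have : 0 < r := by linarith
    rw [hm, hc]; field_simp; ring
  have hu2 : (r - 1) ^ 2 / (4 * r) ≤ (r - 1) ^ 2 / 2 := by
    apply div_le_div_of_nonneg_left (sq_nonneg _) (by norm_num); linarith
  rw [hgm c₁ hc₁, hgm c₂ hc₂]
  have hfin := tv_hellinger_aux volume (a c₁) (a c₂)
    (fun x => by simp only [ha]; positivity) (fun x => by simp only [ha]; positivity)
    (hsqInt c₁ hc₁) (hsqInt c₂ hc₂) hintp (hone c₁ hc₁) (hone c₂ hc₂)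
    (|r - 1| * Real.sqrt d / 2) (by positivity) ?_
  · refine hfin.trans (le_of_eq ?_); ring
  · have hd : (0 : ℝ) ≤ d := Nat.cast_nonneg d
    rw [div_pow, mul_pow, sq_abs, Real.sq_sqrt hd]
    have : (d : ℝ) / 4 * Real.log (m ^ 2 * (c₁ * c₂)) ≤ d / 4 * ((r - 1) ^ 2 / 2) :=
      mul_le_mul_of_nonneg_left (by linarith) (by positivity)
    rw [hlog] at hb1
    linarith
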